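/- Fix z ∈ ℂ and suppose a Jost function from the right F_R(·, λ, z) exists. Then, as X → 0⁺, ‖F_{R1}(h(X), λ, z) − (κ_- /a_-)^{iθ}·X^{iθ}·I₂‖ = O(X²), where I₂ is the 2×2 identity matrix and ‖·‖ is the maximum of the entrywise moduli. -/

import Mathlib

open Asymptotics Filter MeasureTheory Matrix

/-- The Dirac matrix `Γ¹ = diag(1,1,−1,−1)`. -/
noncomputable def Gamma1 : Matrix (Fin 4) (Fin 4) ℂ :=
  !![1, 0, 0, 0; 0, 1, 0, 0; 0, 0, -1, 0; 0, 0, 0, -1]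

/-- The Dirac matrix `Γ²`. -/
noncomputable def Gamma2 : Matrix (Fin 4) (Fin 4) ℂ :=
  !![0, 0, 0, 1; 0, 0, -1, 0; 0, -1, 0, 0; 1, 0, 0, 0]

/-- The Dirac matrix `Γ⁰`. -/
noncomputable def Gamma0 : Matrix (Fin 4) (Fin 4) ℂ :=
  !![0, 0, -Complex.I, 0; 0, 0, 0, Complex.I; Complex.I, 0, 0, 0; 0, -Complex.I, 0, 0]

/-- `e^{Γ¹s} = diag(e^s, e^s, e^{−s}, e^{−s})`, the exponential of `s·Γ¹`. -/
noncomputable def expG1 (s : ℂ) : Matrix (Fin 4) (Fin 4) ℂ :=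
  Matrix.diagonal ![Complex.exp s, Complex.exp s, Complex.exp (-s), Complex.exp (-s)]

/-- Entrywise derivative of a matrix-valued function of a real variable. -/
noncomputable def matDeriv (F : ℝ → Matrix (Fin 4) (Fin 4) ℂ) (t : ℝ) :
    Matrix (Fin 4) (Fin 4) ℂ :=
  Matrix.of fun i j => deriv (fun s => F s i j) t

/-- `F` is a Jost function from the right for the stationary Dirac equation with
potentials `a`, `b`, `c`, phase `C⁻ = Cm`, energy `λ = lam` and angular momentum `z`:
a `C¹` solution of `(−iΓ¹ d/dx − z·a·Γ² + b·Γ⁰ + c)F = λF` with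
`e^{iΓ¹C⁻(x)}·F(x)·e^{−iΓ¹λx} → I₄` as `x → −∞`. -/
def IsJostRight (a b c Cm : ℝ → ℝ) (lam : ℝ) (z : ℂ)
    (F : ℝ → Matrix (Fin 4) (Fin 4) ℂ) : Prop :=
  (∀ i j : Fin 4, ContDiff ℝ 1 fun t => F t i j) ∧
  (∀ t : ℝ, (-Complex.I) • (Gamma1 * matDeriv F t) - (z * ((a t : ℝ) : ℂ)) • (Gamma2 * F t)
      + ((b t : ℝ) : ℂ) • (Gamma0 * F t) + ((c t : ℝ) : ℂ) • F t = ((lam : ℝ) : ℂ) • F t) ∧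
  (∀ i j : Fin 4, Filter.Tendsto
      (fun t => (expG1 (Complex.I * ((Cm t : ℝ) : ℂ)) * F t *
        expG1 (-(Complex.I * ((lam : ℝ) : ℂ) * ((t : ℝ) : ℂ)))) i j)
      Filter.atBot (nhds ((1 : Matrix (Fin 4) (Fin 4) ℂ) i j)))

/-- The `2×2` block of a `4×4` matrix in block position `(p,q)`. -/
def blk (F : Matrix (Fin 4) (Fin 4) ℂ) (p q : Fin 2) : Matrix (Fin 2) (Fin 2) ℂ :=
  Matrix.of fun i j =>
    F ⟨2 * (p : ℕ) + (i : ℕ), by have := p.isLt; have := i.isLt; omega⟩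
      ⟨2 * (q : ℕ) + (j : ℕ), by have := q.isLt; have := j.isLt; omega⟩

/-- The maximum of the moduli of the entries of a `2×2` complex matrix. -/
noncomputable def mnorm2 (M : Matrix (Fin 2) (Fin 2) ℂ) : ℝ :=
  max (max ‖M 0 0‖ ‖M 0 1‖)
      (max ‖M 1 0‖ ‖M 1 1‖)

lemma aux_decay (f f' : ℝ → ℂ) (L : ℂ) (μ : ℝ) (hμ : 0 < μ)
    (hd : ∀ s, HasDerivAt f (f' s) s)
    (hb : f' =O[atBot] fun s => Real.exp (μ * s))
    (hl : Tendsto f atBot (nhds L)) :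
    (fun s => f s - L) =O[atBot] fun s => Real.exp (μ * s) := by
  obtain ⟨K, hK0, hK⟩ := hb.exists_pos
  rw [IsBigOWith_def] at hK
  obtain ⟨T, hT⟩ := eventually_atBot.1 hK
  refine IsBigO.of_bound (K / μ) ?_
  filter_upwards [eventually_le_atBot T] with s hs
  have key : ∀ u ≤ s, ‖f s - f u‖ ≤ K / μ * Real.exp (μ * s) := by
    intro u hu
    have h1 := image_norm_le_of_norm_deriv_right_le_deriv_boundary
      (f := fun x => f x - f u) (f' := f') (a := u) (b := s)
      (B := fun x => K / μ * (Real.exp (μ * x) - Real.exp (μ * u)))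
      (B' := fun x => K * Real.exp (μ * x))
      (fun x _ => ((hd x).sub_const (f u)).continuousAt.continuousWithinAt)
      (fun x _ => ((hd x).sub_const (f u)).hasDerivWithinAt)
      (by simp)
      (by
        intro x
        have h2 : HasDerivAt (fun x => μ * x) μ x := by
          simpa using (hasDerivAt_id x).const_mul μ
        have h3 := ((h2.exp.sub_const (Real.exp (μ * u))).const_mul (K / μ))
        exact h3.congr_deriv (by field_simp))
      (by
        intro x hx
        have := hT x (hx.2.le.trans hs)
        rwa [Real.norm_of_nonneg (Real.exp_pos _).le] at this)
    have h4 := h1 (Set.right_mem_Icc.2 hu)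
    refine h4.trans ?_
    have : 0 < K / μ := by positivity
    have := Real.exp_pos (μ * u)
    gcongr
    linarith
  have h5 : Tendsto (fun u => ‖f s - f u‖) atBot (nhds ‖f s - L‖) :=
    (tendsto_const_nhds.sub hl).norm
  rw [Real.norm_of_nonneg (Real.exp_pos _).le]
  refine le_of_tendsto h5 ?_
  filter_upwards [eventually_le_atBot s] with u hu using key u hu

lemma aux_norm_exp (ω s : ℝ) : ‖Complex.exp (Complex.I * ω * s)‖ = 1 := by
  have : Complex.I * (ω : ℂ) * s = ((ω * s : ℝ) : ℂ) * Complex.I := by push_cast; ring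
  rw [this, Complex.norm_exp_ofReal_mul_I]

lemma aux_step (f R : ℝ → ℂ) (L : ℂ) (ω μ : ℝ) (hμ : 0 < μ)
    (hd : ∀ s, HasDerivAt f (Complex.I * ω * f s + R s) s)
    (hR : R =O[atBot] fun s => Real.exp (μ * s))
    (hl : Tendsto (fun s : ℝ => Complex.exp (-(Complex.I * ω * s)) * f s) atBot (nhds L)) :
    (fun s : ℝ => f s - Complex.exp (Complex.I * ω * s) * L) =O[atBot]
      fun s => Real.exp (μ * s) := by
  have hn : ∀ s : ℝ, ‖Complex.exp (-(Complex.I * ω * s))‖ = 1 := by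
    intro s
    have := aux_norm_exp (-ω) s
    rw [← this]; congr 2; push_cast; ring
  have h1 := aux_decay (fun s : ℝ => Complex.exp (-(Complex.I * ω * s)) * f s)
    (fun s : ℝ => Complex.exp (-(Complex.I * ω * s)) * R s) L μ hμ
    (by
      intro s
      have h2 : HasDerivAt (fun s : ℝ => -(Complex.I * ω * (s : ℂ))) (-(Complex.I * ω)) s := by
        exact ((Complex.ofRealCLM.hasDerivAt (x := s)).const_mul (Complex.I * (ω : ℂ))).neg.congr_deriv
          (by simp)
      exact (h2.cexp.mul (hd s)).congr_deriv (by ring))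
    (by
      refine IsBigO.trans (IsBigO.of_bound 1 (Eventually.of_forall fun s => ?_)) hR
      rw [norm_mul, hn])
    hl
  refine IsBigO.trans (IsBigO.of_bound 1 (Eventually.of_forall fun s => ?_)) h1
  have : f s - Complex.exp (Complex.I * ω * s) * L
      = Complex.exp (Complex.I * ω * s) * (Complex.exp (-(Complex.I * ω * s)) * f s - L) := by
    rw [mul_sub, ← mul_assoc, ← Complex.exp_add]
    simp
  rw [this, norm_mul, aux_norm_exp]

lemma aux_expO (μ ν : ℝ) (h : μ ≤ ν) :
    (fun s : ℝ => Real.exp (ν * s)) =O[atBot] fun s => Real.exp (μ * s) := by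
  refine IsBigO.of_bound 1 ?_
  filter_upwards [eventually_le_atBot 0] with s hs
  rw [Real.norm_of_nonneg (Real.exp_pos _).le, Real.norm_of_nonneg (Real.exp_pos _).le, one_mul]
  exact Real.exp_le_exp.2 (mul_le_mul_of_nonpos_right h hs)

lemma aux_bdd (f : ℝ → ℂ) (L : ℂ) (ω : ℝ)
    (hl : Tendsto (fun s : ℝ => Complex.exp (-(Complex.I * ω * s)) * f s) atBot (nhds L)) :
    f =O[atBot] fun _ => (1 : ℝ) := by
  have hn : ∀ s : ℝ, ‖Complex.exp (-(Complex.I * ω * s))‖ = 1 := by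
    intro s
    have := aux_norm_exp (-ω) s
    rw [← this]; congr 2; push_cast; ring
  refine IsBigO.trans (IsBigO.of_bound 1 (Eventually.of_forall fun s => ?_)) (hl.isBigO_one ℝ)
  rw [norm_mul, hn]; simp

lemma aux_core (f0 f1 f2 f3 : ℝ → ℂ) (a b c : ℝ → ℝ) (z : ℂ) (lam cm κ : ℝ) (hκ : 0 < κ)
    (d0 d1 : ℂ)
    (h0 : ∀ s, HasDerivAt f0 (Complex.I * (lam - c s) * f0 s + Complex.I * z * a s * f3 s - b s * f2 s) s)
    (h1 : ∀ s, HasDerivAt f1 (Complex.I * (lam - c s) * f1 s - Complex.I * z * a s * f2 s + b s * f3 s) s)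
    (h2 : ∀ s, HasDerivAt f2 (-Complex.I * (lam - c s) * f2 s + Complex.I * z * a s * f1 s - b s * f0 s) s)
    (h3 : ∀ s, HasDerivAt f3 (-Complex.I * (lam - c s) * f3 s - Complex.I * z * a s * f0 s + b s * f1 s) s)
    (haO : a =O[atBot] fun s => Real.exp (κ * s))
    (hbO : b =O[atBot] fun s => Real.exp (κ * s))
    (hcO : (fun s => c s - cm) =O[atBot] fun s => Real.exp (2 * κ * s))
    (l0 : Tendsto (fun s : ℝ => Complex.exp (-(Complex.I * (lam - cm : ℝ) * s)) * f0 s) atBot (nhds d0))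
    (l1 : Tendsto (fun s : ℝ => Complex.exp (-(Complex.I * (lam - cm : ℝ) * s)) * f1 s) atBot (nhds d1))
    (l2 : Tendsto (fun s : ℝ => Complex.exp (-(Complex.I * (-(lam - cm) : ℝ) * s)) * f2 s) atBot (nhds 0))
    (l3 : Tendsto (fun s : ℝ => Complex.exp (-(Complex.I * (-(lam - cm) : ℝ) * s)) * f3 s) atBot (nhds 0)) :
    ((fun s : ℝ => f0 s - Complex.exp (Complex.I * (lam - cm : ℝ) * s) * d0) =O[atBot]
      fun s => Real.exp (2 * κ * s)) ∧
    ((fun s : ℝ => f1 s - Complex.exp (Complex.I * (lam - cm : ℝ) * s) * d1) =O[atBot]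
      fun s => Real.exp (2 * κ * s)) := by
  have b0 := aux_bdd _ _ _ l0
  have b1 := aux_bdd _ _ _ l1
  have b2 := aux_bdd _ _ _ l2
  have b3 := aux_bdd _ _ _ l3
  have ee : (fun s => Real.exp (κ * s) * Real.exp (κ * s)) = fun s => Real.exp (2 * κ * s) := by
    funext s; rw [← Real.exp_add]; ring_nf
  have aC : (fun s => (Complex.I * z * (a s : ℂ))) =O[atBot] fun s => Real.exp (κ * s) :=
    IsBigO.const_mul_left (IsBigO.trans (IsBigO.of_bound 1 (Eventually.of_forall fun s => by simp)) haO) _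
  have bC : (fun s => (b s : ℂ)) =O[atBot] fun s => Real.exp (κ * s) :=
    IsBigO.trans (IsBigO.of_bound 1 (Eventually.of_forall fun s => by simp)) hbO
  have cC : (fun s => (Complex.I * ((c s - cm : ℝ) : ℂ))) =O[atBot] fun s => Real.exp (2 * κ * s) :=
    IsBigO.const_mul_left (IsBigO.trans (IsBigO.of_bound 1
      (Eventually.of_forall fun s => by rw [Complex.norm_real, one_mul])) hcO) _
  have cC1 : ∀ f : ℝ → ℂ, f =O[atBot] (fun _ => (1 : ℝ)) →
      (fun s => (Complex.I * ((c s - cm : ℝ) : ℂ)) * f s) =O[atBot] fun s => Real.exp (2 * κ * s) := by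
    intro f hf; simpa using cC.mul hf
  have aC1 : ∀ f : ℝ → ℂ, f =O[atBot] (fun _ => (1 : ℝ)) →
      (fun s => (Complex.I * z * (a s : ℂ)) * f s) =O[atBot] fun s => Real.exp (κ * s) := by
    intro f hf; simpa using aC.mul hf
  have bC1 : ∀ f : ℝ → ℂ, f =O[atBot] (fun _ => (1 : ℝ)) →
      (fun s => (b s : ℂ) * f s) =O[atBot] fun s => Real.exp (κ * s) := by
    intro f hf; simpa using bC.mul hf
  have aC2 : ∀ f : ℝ → ℂ, f =O[atBot] (fun s => Real.exp (κ * s)) →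
      (fun s => (Complex.I * z * (a s : ℂ)) * f s) =O[atBot] fun s => Real.exp (2 * κ * s) := by
    intro f hf; rw [← ee]; exact aC.mul hf
  have bC2 : ∀ f : ℝ → ℂ, f =O[atBot] (fun s => Real.exp (κ * s)) →
      (fun s => (b s : ℂ) * f s) =O[atBot] fun s => Real.exp (2 * κ * s) := by
    intro f hf; rw [← ee]; exact bC.mul hf
  have e21 := aux_expO κ (2 * κ) (by linarith)
  have s2 : f2 =O[atBot] fun s => Real.exp (κ * s) := by
    simpa using aux_step f2 (fun s => (Complex.I * ((c s - cm : ℝ) : ℂ)) * f2 s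
        + (Complex.I * z * (a s : ℂ)) * f1 s - (b s : ℂ) * f0 s) 0 (-(lam - cm)) κ hκ
      (fun s => by convert h2 s using 1; push_cast; ring)
      ((((cC1 f2 b2).trans e21).add (aC1 f1 b1)).sub (bC1 f0 b0)) l2
  have s3 : f3 =O[atBot] fun s => Real.exp (κ * s) := by
    simpa using aux_step f3 (fun s => (Complex.I * ((c s - cm : ℝ) : ℂ)) * f3 s
        - (Complex.I * z * (a s : ℂ)) * f0 s + (b s : ℂ) * f1 s) 0 (-(lam - cm)) κ hκ
      (fun s => by convert h3 s using 1; push_cast; ring)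
      ((((cC1 f3 b3).trans e21).sub (aC1 f0 b0)).add (bC1 f1 b1)) l3
  constructor
  · exact aux_step f0 (fun s => -((Complex.I * ((c s - cm : ℝ) : ℂ)) * f0 s)
        + (Complex.I * z * (a s : ℂ)) * f3 s - (b s : ℂ) * f2 s) d0 (lam - cm) (2 * κ) (by linarith)
      (fun s => by convert h0 s using 1; push_cast; ring)
      (((cC1 f0 b0).neg_left.add (aC2 f3 s3)).sub (bC2 f2 s2)) l0
  · exact aux_step f1 (fun s => -((Complex.I * ((c s - cm : ℝ) : ℂ)) * f1 s)
        - (Complex.I * z * (a s : ℂ)) * f2 s + (b s : ℂ) * f3 s) d1 (lam - cm) (2 * κ) (by linarith)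
      (fun s => by convert h1 s using 1; push_cast; ring)
      (((cC1 f1 b1).neg_left.sub (aC2 f2 s2)).add (bC2 f3 s3)) l1

/-- integral of a big-O of an exponential over `(-∞, t]`; no measurability required -/
lemma aux_intO (f : ℝ → ℝ) (μ : ℝ) (hμ : 0 < μ)
    (hb : f =O[atBot] fun s => Real.exp (μ * s)) :
    (fun t => ∫ s in Set.Iic t, f s) =O[atBot] fun s => Real.exp (μ * s) := by
  obtain ⟨K, hK0, hK⟩ := hb.exists_pos
  rw [IsBigOWith_def] at hK
  obtain ⟨T, hT⟩ := eventually_atBot.1 hK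
  refine IsBigO.of_bound (K / μ) ?_
  filter_upwards [eventually_le_atBot T] with t ht
  have h1 : ‖∫ s in Set.Iic t, f s‖ ≤ ∫ s in Set.Iic t, K * Real.exp (μ * s) := by
    refine norm_integral_le_of_norm_le ((integrableOn_exp_mul_Iic hμ t).const_mul K) ?_
    refine (ae_restrict_iff' measurableSet_Iic).2 (Eventually.of_forall fun s hs => ?_)
    have := hT s (le_trans hs ht)
    rwa [Real.norm_of_nonneg (Real.exp_pos _).le] at this
  rw [integral_const_mul, integral_exp_mul_Iic hμ] at h1
  rw [Real.norm_of_nonneg (Real.exp_pos (μ * t)).le]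
  calc _ ≤ _ := h1
    _ = _ := by ring

lemma aux_phase (g : ℝ → ℝ) (κ am θ ω : ℝ) (hκ : 0 < κ) (ham : 0 < am) (hθ : θ * κ = ω)
    (hg : (fun s => g s - am / κ * Real.exp (κ * s)) =O[atBot] fun s => Real.exp (3 * κ * s)) :
    (∀ᶠ s in atBot, 0 < g s) ∧
    ((fun s => Real.exp (2 * κ * s)) =O[atBot] fun s => g s ^ 2) ∧
    ((fun s : ℝ => Complex.exp (Complex.I * (θ : ℂ) * ((Real.log (κ / am) : ℝ) : ℂ))
            * Complex.exp (Complex.I * (θ : ℂ) * ((Real.log (g s) : ℝ) : ℂ))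
        - Complex.exp (Complex.I * ω * s)) =O[atBot] fun s => Real.exp (2 * κ * s)) := by
  set y : ℝ → ℝ := fun s => κ / am * g s * Real.exp (-(κ * s)) with hy
  have hgy : ∀ s, g s = am / κ * y s * Real.exp (κ * s) := by
    intro s
    have : Real.exp (-(κ * s)) * Real.exp (κ * s) = 1 := by rw [← Real.exp_add]; simp
    simp only [hy]
    calc g s = g s * (Real.exp (-(κ * s)) * Real.exp (κ * s)) := by rw [this, mul_one]
      _ = _ := by field_simp
  have hy1 : (fun s => y s - 1) =O[atBot] fun s => Real.exp (2 * κ * s) := by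
    have h1 := (hg.const_mul_left (κ / am)).mul
      (isBigO_refl (fun s => Real.exp (-(κ * s))) atBot)
    refine (h1.congr_left ?_).congr_right ?_
    · intro s
      have : Real.exp (κ * s) * Real.exp (-(κ * s)) = 1 := by rw [← Real.exp_add]; simp
      simp only [hy]
      have h2 : κ / am * (am / κ) = 1 := by field_simp
      linear_combination (-1 : ℝ) * κ / am * (am / κ) * this - h2
    · intro s; rw [← Real.exp_add]; ring_nf
  have he : Tendsto (fun s => Real.exp (2 * κ * s)) atBot (nhds 0) :=
    Real.tendsto_exp_atBot.comp (tendsto_id.const_mul_atBot (by linarith))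
  have hyt : Tendsto y atBot (nhds 1) := by
    have := (hy1.trans_tendsto he).add_const 1
    simpa using this
  have hyp : ∀ᶠ s in atBot, 1 / 2 < y s := hyt.eventually (lt_mem_nhds (by norm_num))
  have hgp : ∀ᶠ s in atBot, 0 < g s := by
    filter_upwards [hyp] with s hs
    rw [hgy]
    have : 0 < y s := by linarith
    positivity
  refine ⟨hgp, ?_, ?_⟩
  · have h1 : (fun s => Real.exp (κ * s)) =O[atBot] g := by
      refine IsBigO.of_bound (2 * (κ / am)) ?_
      filter_upwards [hyp, hgp] with s hs hs2
      rw [Real.norm_of_nonneg (Real.exp_pos _).le, Real.norm_of_nonneg hs2.le, hgy]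
      have h3 : 2 * (κ / am) * (am / κ * y s * Real.exp (κ * s)) = 2 * y s * Real.exp (κ * s) := by
        field_simp
      rw [h3]
      have := Real.exp_pos (κ * s)
      nlinarith
    refine (h1.pow 2).congr_left ?_
    intro s; rw [← Real.exp_nat_mul]; push_cast; ring_nf
  · have hlog : (fun s => Real.log (y s)) =O[atBot] fun s => Real.exp (2 * κ * s) := by
      have h1 := (Real.hasDerivAt_log one_ne_zero).differentiableAt.isBigO_sub
      have h2 := h1.comp_tendsto hyt
      simp only [Function.comp_def, Real.log_one, sub_zero] at h2
      exact h2.trans hy1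
    refine IsBigO.trans (IsBigO.of_bound 1 ?_) (hlog.const_mul_left θ)
    filter_upwards [hyp, hgp] with s hs hs2
    have hy0 : 0 < y s := by linarith
    have h1 : Real.log (κ / am) + Real.log (g s) = Real.log (y s) + κ * s := by
      rw [← Real.log_mul (by positivity) hs2.ne', hgy,
        ← Real.log_exp (κ * s), ← Real.log_mul hy0.ne' (Real.exp_pos _).ne', Real.log_exp]
      congr 1
      field_simp
    have h2 : Complex.exp (Complex.I * (θ : ℂ) * ((Real.log (κ / am) : ℝ) : ℂ))
            * Complex.exp (Complex.I * (θ : ℂ) * ((Real.log (g s) : ℝ) : ℂ))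
        - Complex.exp (Complex.I * ω * s) = Complex.exp (Complex.I * ω * s) *
          (Complex.exp (Complex.I * ((θ * Real.log (y s) : ℝ) : ℂ)) - 1) := by
      rw [← Complex.exp_add, mul_sub, ← Complex.exp_add, mul_one]
      congr 2
      have h1c : ((Real.log (κ / am) : ℝ) : ℂ) + ((Real.log (g s) : ℝ) : ℂ)
        = ((Real.log (y s) : ℝ) : ℂ) + κ * s := by exact_mod_cast h1
      have hθc : (θ : ℂ) * κ = ω := by exact_mod_cast hθ
      push_cast
      linear_combination Complex.I * θ * h1c + Complex.I * s * hθc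
    rw [h2, norm_mul, aux_norm_exp, one_mul, one_mul]
    exact Real.norm_exp_I_mul_ofReal_sub_one_le

/-- For fixed `z`, the first block of the Jost function from the right
satisfies `F_{R1}(h(X),λ,z) = (κ₋/a₋)^{iθ}·X^{iθ}·I₂ + O(X²)` as `X → 0⁺`. -/
theorem stmt_17 (M Q Λ : ℝ) (hM : 0 < M) (hΛ : 0 < Λ)
    (rn rc rm rp : ℝ) (hrn : rn < 0) (hrc : 0 < rc) (hrcm : rc < rm) (hrmp : rm < rp)
    (F : ℝ → ℝ)
    (hF : ∀ r, F r = 1 - 2 * M / r + Q ^ 2 / r ^ 2 - Λ * r ^ 2 / 3)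
    (hFn : F rn = 0) (hFc : F rc = 0) (hFm : F rm = 0) (hFp : F rp = 0)
    (hFpos : ∀ r ∈ Set.Ioo rm rp, 0 < F r)
    (κn κc κm κp : ℝ)
    (hκn : κn = deriv F rn / 2) (hκc : κc = deriv F rc / 2)
    (hκm : κm = deriv F rm / 2) (hκp : κp = deriv F rp / 2)
    (hκmpos : 0 < κm) (hκpneg : κp < 0)
    (x : ℝ → ℝ)
    (hx : ∀ r, x r = 1 / (2 * κn) * Real.log (r - rn) + 1 / (2 * κc) * Real.log (r - rc)
      + 1 / (2 * κm) * Real.log (r - rm) + 1 / (2 * κp) * Real.log (rp - r))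
    (rfun : ℝ → ℝ)
    (hrmem : ∀ s, rfun s ∈ Set.Ioo rm rp) (hrinv : ∀ s, x (rfun s) = s)
    (m q : ℝ) (a b c : ℝ → ℝ)
    (ha : ∀ s, a s = Real.sqrt (F (rfun s)) / rfun s)
    (hb : ∀ s, b s = m * Real.sqrt (F (rfun s)))
    (hc : ∀ s, c s = q * Q / rfun s)
    (cm cp : ℝ) (hcm : cm = q * Q / rm) (hcp : cp = q * Q / rp)
    (am : ℝ) (ham : 0 < am)
    (haas : (fun s => a s - am * Real.exp (κm * s)) =O[atBot] fun s => Real.exp (3 * κm * s))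
    (haint : Integrable a)
    (A : ℝ) (hA : A = ∫ s, a s) (hApos : 0 < A)
    (g : ℝ → ℝ) (hg : ∀ t, g t = ∫ s in Set.Iic t, a s)
    (hfun : ℝ → ℝ) (hgh : ∀ t, hfun (g t) = t)
    (hhg : ∀ X ∈ Set.Ioo (0 : ℝ) A, g (hfun X) = X)
    (lam : ℝ)
    (Cminus : ℝ → ℝ)
    (hCminus : ∀ t, Cminus t = (∫ s in Set.Iic t, (c s - cm)) + cm * t)
    (θ : ℝ) (hθ : θ = (lam - cm) / κm)
    (z : ℂ) (FR : ℝ → Matrix (Fin 4) (Fin 4) ℂ)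
    (hJost : IsJostRight a b c Cminus lam z FR) :
    (fun X : ℝ => mnorm2 (blk (FR (hfun X)) 0 0
        - (Complex.exp (Complex.I * (θ : ℂ) * ((Real.log (κm / am) : ℝ) : ℂ))
            * Complex.exp (Complex.I * (θ : ℂ) * ((Real.log X : ℝ) : ℂ)))
          • (1 : Matrix (Fin 2) (Fin 2) ℂ)))
      =O[nhdsWithin 0 (Set.Ioi 0)] fun X => X ^ 2 := by
  obtain ⟨hJ1, hJ2, hJ3⟩ := hJost
  have hrm0 : 0 < rm := hrc.trans hrcm
  have hr0 : ∀ s, 0 < rfun s := fun s => hrm0.trans (hrmem s).1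
  -- decay of r - rm
  have hrO : (fun s => rfun s - rm) =O[atBot] fun s => Real.exp (2 * κm * s) := by
    have hcont : ContinuousOn (fun r => 1 / (2 * κn) * Real.log (r - rn)
        + 1 / (2 * κc) * Real.log (r - rc)) (Set.Icc rm rp) := by
      refine ContinuousOn.add (continuousOn_const.mul (ContinuousOn.log (by fun_prop) ?_))
        (continuousOn_const.mul (ContinuousOn.log (by fun_prop) ?_))
      · intro r hr; have := hr.1; exact (by linarith : 0 < r - rn).ne'
      · intro r hr; have := hr.1; exact (by linarith : 0 < r - rc).ne'
    obtain ⟨D, hD⟩ := isCompact_Icc.exists_bound_of_continuousOn hcont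
    set D2 := D - 1 / (2 * κp) * Real.log (rp - rm) with hD2
    refine IsBigO.of_bound (Real.exp (2 * κm * D2)) (Eventually.of_forall fun s => ?_)
    obtain ⟨h1, h2⟩ := hrmem s
    have h3 := (abs_le.1 (hD (rfun s) ⟨h1.le, h2.le⟩)).1
    have h4 := hrinv s
    rw [hx] at h4
    have h5 : Real.log (rp - rfun s) ≤ Real.log (rp - rm) :=
      Real.log_le_log (by linarith) (by linarith)
    have h6 : 1 / (2 * κp) < 0 := one_div_neg.2 (by linarith)
    have h7 := mul_le_mul_of_nonpos_left h5 h6.le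
    have h8 : 1 / (2 * κm) * Real.log (rfun s - rm) ≤ s + D2 := by
      rw [hD2]; linarith
    have h9 : Real.log (rfun s - rm) ≤ 2 * κm * D2 + 2 * κm * s := by
      have h10 : Real.log (rfun s - rm)
          = 2 * κm * (1 / (2 * κm) * Real.log (rfun s - rm)) := by field_simp
      rw [h10]
      have := mul_le_mul_of_nonneg_left h8 (by linarith : 0 ≤ 2 * κm)
      linarith
    rw [Real.norm_of_nonneg (by linarith), Real.norm_of_nonneg (Real.exp_pos _).le,
      ← Real.exp_add]
    exact (Real.log_le_iff_le_exp (by linarith)).1 h9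
  have haO : a =O[atBot] fun s => Real.exp (κm * s) := by
    have h1 := (haas.trans (aux_expO κm (3 * κm) (by linarith))).add
      ((isBigO_refl (fun s => Real.exp (κm * s)) atBot).const_mul_left am)
    refine h1.congr_left fun s => by ring
  have hbO : b =O[atBot] fun s => Real.exp (κm * s) := by
    refine IsBigO.trans (IsBigO.of_bound (|m| * rp) (Eventually.of_forall fun s => ?_)) haO
    have h1 : b s = m * rfun s * a s := by
      rw [hb, ha]; have := (hr0 s).ne'; field_simp
    rw [h1, norm_mul, norm_mul, Real.norm_eq_abs m, Real.norm_of_nonneg (hr0 s).le]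
    have := (hrmem s).2.le
    gcongr
  have hcO : (fun s => c s - cm) =O[atBot] fun s => Real.exp (2 * κm * s) := by
    refine IsBigO.trans (IsBigO.of_bound (|q * Q| / (rm * rm)) (Eventually.of_forall fun s => ?_)) hrO
    have h1 : c s - cm = -(q * Q) / (rm * rfun s) * (rfun s - rm) := by
      rw [hc, hcm]; have := (hr0 s).ne'; have := hrm0.ne'; field_simp; ring
    rw [h1, norm_mul, norm_div, norm_neg, Real.norm_eq_abs (q * Q),
      Real.norm_of_nonneg (mul_pos hrm0 (hr0 s)).le]
    have := (hrmem s).1.le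
    gcongr
  -- phase
  have hCO : (fun t => Cminus t - cm * t) =O[atBot] fun s => Real.exp (2 * κm * s) := by
    refine (aux_intO _ (2 * κm) (by linarith) hcO).congr_left fun t => ?_
    rw [hCminus]; ring
  have he : Tendsto (fun s => Real.exp (2 * κm * s)) atBot (nhds 0) :=
    Real.tendsto_exp_atBot.comp (tendsto_id.const_mul_atBot (by linarith))
  have hCt := hCO.trans_tendsto he
  have hPh : Tendsto (fun t => Complex.exp (-(Complex.I * ((Cminus t - cm * t : ℝ) : ℂ)))) atBot
      (nhds 1) := by
    have h1 : Continuous fun u : ℝ => Complex.exp (-(Complex.I * (u : ℂ))) := by fun_prop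
    have := (h1.tendsto 0).comp hCt
    simpa [Function.comp_def] using this
  have hDer : ∀ i j s, HasDerivAt (fun t => FR t i j) (matDeriv FR s i j) s := by
    intro i j s
    exact ((hJ1 i j).differentiable one_ne_zero s).hasDerivAt
  -- lower components
  have low : ∀ f : ℝ → ℂ, Tendsto (fun t => Complex.exp (-(Complex.I * ((Cminus t : ℝ) : ℂ))) * f t *
        Complex.exp (-(Complex.I * ((lam : ℝ) : ℂ) * ((t : ℝ) : ℂ)))) atBot (nhds 0) →
      Tendsto (fun s : ℝ => Complex.exp (-(Complex.I * (-(lam - cm) : ℝ) * s)) * f s) atBot (nhds 0) := by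
    intro f hf
    rw [tendsto_zero_iff_norm_tendsto_zero] at hf ⊢
    refine hf.congr fun t => ?_
    have e1 := aux_norm_exp (-1) (Cminus t)
    have e2 := aux_norm_exp (-lam) t
    have e3 := aux_norm_exp (lam - cm) t
    have e1' : Complex.I * ((-1 : ℝ) : ℂ) * (Cminus t : ℂ) = -(Complex.I * (Cminus t : ℂ)) := by
      push_cast; ring
    have e2' : Complex.I * ((-lam : ℝ) : ℂ) * (t : ℂ) = -(Complex.I * (lam : ℂ) * t) := by
      push_cast; ring
    have e3' : Complex.I * ((lam - cm : ℝ) : ℂ) * (t : ℂ)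
      = -(Complex.I * ((-(lam - cm) : ℝ) : ℂ) * t) := by
      push_cast; ring
    rw [e1'] at e1
    rw [e2'] at e2
    rw [e3'] at e3
    rw [norm_mul, norm_mul, norm_mul, e1, e2, e3]; ring
  have upp : ∀ (f : ℝ → ℂ) (L : ℂ), Tendsto (fun t => Complex.exp ((Complex.I * ((Cminus t : ℝ) : ℂ))) * f t *
        Complex.exp (-(Complex.I * ((lam : ℝ) : ℂ) * ((t : ℝ) : ℂ)))) atBot (nhds L) →
      Tendsto (fun s : ℝ => Complex.exp (-(Complex.I * (lam - cm : ℝ) * s)) * f s) atBot (nhds L) := by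
    intro f L hf
    have h1 := hPh.mul hf
    rw [one_mul] at h1
    refine h1.congr fun t => ?_
    have : Complex.exp (-(Complex.I * (lam - cm : ℝ) * t))
        = Complex.exp (-(Complex.I * ((Cminus t - cm * t : ℝ) : ℂ))) *
          Complex.exp ((Complex.I * ((Cminus t : ℝ) : ℂ))) *
          Complex.exp (-(Complex.I * ((lam : ℝ) : ℂ) * ((t : ℝ) : ℂ))) := by
      rw [← Complex.exp_add, ← Complex.exp_add]; congr 1; push_cast; ring
    rw [this]; ring
  have core : ∀ j : Fin 4, j = 0 ∨ j = 1 →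
      ((fun s : ℝ => FR s 0 j - Complex.exp (Complex.I * (lam - cm : ℝ) * s)
        * (1 : Matrix (Fin 4) (Fin 4) ℂ) 0 j) =O[atBot] fun s => Real.exp (2 * κm * s)) ∧
      ((fun s : ℝ => FR s 1 j - Complex.exp (Complex.I * (lam - cm : ℝ) * s)
        * (1 : Matrix (Fin 4) (Fin 4) ℂ) 1 j) =O[atBot] fun s => Real.exp (2 * κm * s)) := by
    intro j hj
    have lims : ∀ i, Tendsto
      (fun t => (![Complex.exp (Complex.I * (Cminus t : ℂ)), Complex.exp (Complex.I * (Cminus t : ℂ)),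
          Complex.exp (-(Complex.I * (Cminus t : ℂ))), Complex.exp (-(Complex.I * (Cminus t : ℂ)))]
            : Fin 4 → ℂ) i * FR t i j *
        Complex.exp (-(Complex.I * (lam : ℂ) * (t : ℂ)))) atBot
        (nhds ((1 : Matrix (Fin 4) (Fin 4) ℂ) i j)) := by
      intro i
      refine (hJ3 i j).congr fun t => ?_
      rw [expG1, expG1, Matrix.mul_diagonal, Matrix.diagonal_mul]
      rcases hj with rfl | rfl <;> rfl
    have ode : ∀ i t, _ := fun i t => congrFun (congrFun (hJ2 t) i) j
    have o0 := fun t => ode 0 t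
    have o1 := fun t => ode 1 t
    have o2 := fun t => ode 2 t
    have o3 := fun t => ode 3 t
    simp [Gamma1, Gamma2, Gamma0, Matrix.mul_apply, Matrix.vecMul, dotProduct, Fin.sum_univ_four] at o0 o1 o2 o3
    have I2 := Complex.I_mul_I
    refine aux_core (fun t => FR t 0 j) (fun t => FR t 1 j) (fun t => FR t 2 j) (fun t => FR t 3 j)
      a b c z lam cm κm hκmpos _ _ ?_ ?_ ?_ ?_ haO hbO hcO (upp _ _ (lims 0)) (upp _ _ (lims 1))
      (low _ ?_) (low _ ?_)
    · intro s
      refine (hDer 0 j s).congr_deriv ?_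
      linear_combination Complex.I * o0 s + (matDeriv FR s 0 j + b s * FR s 2 j) * I2
    · intro s
      refine (hDer 1 j s).congr_deriv ?_
      linear_combination Complex.I * o1 s + (matDeriv FR s 1 j - b s * FR s 3 j) * I2
    · intro s
      refine (hDer 2 j s).congr_deriv ?_
      linear_combination -Complex.I * o2 s + (matDeriv FR s 2 j + b s * FR s 0 j) * I2
    · intro s
      refine (hDer 3 j s).congr_deriv ?_
      linear_combination -Complex.I * o3 s + (matDeriv FR s 3 j - b s * FR s 1 j) * I2
    · have := lims 2
      rcases hj with rfl | rfl <;> simpa using this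
    · have := lims 3
      rcases hj with rfl | rfl <;> simpa using this
  -- asymptotics of g
  have hgO : (fun s => g s - am / κm * Real.exp (κm * s)) =O[atBot] fun s => Real.exp (3 * κm * s) := by
    refine (aux_intO _ (3 * κm) (by linarith) haas).congr_left fun t => ?_
    rw [integral_sub haint.integrableOn ((integrableOn_exp_mul_Iic hκmpos t).const_mul am),
      integral_const_mul, integral_exp_mul_Iic hκmpos, hg]
    ring
  obtain ⟨hgp, hg2, hph⟩ := aux_phase g κm am θ (lam - cm) hκmpos ham
    (by rw [hθ]; field_simp) hgO
  have hgmono : Monotone g := by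
    intro s t hst
    rw [hg, hg]
    refine setIntegral_mono_set haint.integrableOn (Eventually.of_forall fun u => ?_)
      (HasSubset.Subset.eventuallyLE (Set.Iic_subset_Iic.2 hst))
    rw [Pi.zero_apply, ha]
    exact div_nonneg (Real.sqrt_nonneg _) (hr0 u).le
  have hht : Tendsto hfun (nhdsWithin 0 (Set.Ioi 0)) atBot := by
    rw [tendsto_atBot]
    intro T
    obtain ⟨T', hT', hT'2⟩ := (hgp.and (eventually_le_atBot T)).exists
    have hmin : 0 < min A (g T') := lt_min hApos hT'
    filter_upwards [Ioo_mem_nhdsGT hmin] with X hX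
    by_contra hcon
    push Not at hcon
    have h1 := hgmono (hT'2.trans hcon.le)
    rw [hhg X ⟨hX.1, hX.2.trans_le (min_le_left _ _)⟩] at h1
    exact absurd (hX.2.trans_le (min_le_right _ _)) (not_lt.2 h1)
  have hgX : ∀ᶠ X in nhdsWithin (0 : ℝ) (Set.Ioi 0), g (hfun X) = X := by
    filter_upwards [Ioo_mem_nhdsGT hApos] with X hX using hhg X hX
  -- transfer
  have trans1 : ∀ (f : ℝ → ℂ) (d : ℂ),
      ((fun s : ℝ => f s - Complex.exp (Complex.I * (lam - cm : ℝ) * s) * d) =O[atBot]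
        fun s => Real.exp (2 * κm * s)) →
      (fun X : ℝ => f (hfun X) - (Complex.exp (Complex.I * (θ : ℂ) * ((Real.log (κm / am) : ℝ) : ℂ))
            * Complex.exp (Complex.I * (θ : ℂ) * ((Real.log X : ℝ) : ℂ))) * d)
      =O[nhdsWithin 0 (Set.Ioi 0)] fun X => X ^ 2 := by
    intro f d hf
    have h1 := ((hf.sub (hph.mul (isBigO_const_const d one_ne_zero atBot |>.trans
      (isBigO_refl (fun _ => (1 : ℝ)) _)) |>.congr_right fun s => by rw [mul_one])).trans hg2).comp_tendsto hht
    refine h1.congr' ?_ ?_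
    · filter_upwards [hgX] with X hX
      simp only [Function.comp_def, hX]
      ring
    · filter_upwards [hgX] with X hX
      simp only [Function.comp_def, hX]
  obtain ⟨c00, c10⟩ := core 0 (Or.inl rfl)
  obtain ⟨c01, c11⟩ := core 1 (Or.inr rfl)
  have t00 := (trans1 _ _ c00).norm_left
  have t10 := (trans1 _ _ c10).norm_left
  have t01 := (trans1 _ _ c01).norm_left
  have t11 := (trans1 _ _ c11).norm_left
  refine IsBigO.trans (IsBigO.of_bound 1 (Eventually.of_forall fun X => ?_))
    ((t00.add t01).add (t10.add t11))
  set P := Complex.exp (Complex.I * (θ : ℂ) * ((Real.log (κm / am) : ℝ) : ℂ))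
            * Complex.exp (Complex.I * (θ : ℂ) * ((Real.log X : ℝ) : ℂ)) with hP
  have n0 : ∀ u v : ℂ, 0 ≤ ‖u - P * v‖ := fun _ _ => norm_nonneg _
  have m1 : mnorm2 (blk (FR (hfun X)) 0 0 - P • (1 : Matrix (Fin 2) (Fin 2) ℂ))
      = max (max ‖FR (hfun X) 0 0 - P * (1 : Matrix (Fin 4) (Fin 4) ℂ) 0 0‖
          ‖FR (hfun X) 0 1 - P * (1 : Matrix (Fin 4) (Fin 4) ℂ) 0 1‖)
        (max ‖FR (hfun X) 1 0 - P * (1 : Matrix (Fin 4) (Fin 4) ℂ) 1 0‖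
          ‖FR (hfun X) 1 1 - P * (1 : Matrix (Fin 4) (Fin 4) ℂ) 1 1‖) := by
    simp [mnorm2, blk]
  have p00 := n0 (FR (hfun X) 0 0) ((1 : Matrix (Fin 4) (Fin 4) ℂ) 0 0)
  have p01 := n0 (FR (hfun X) 0 1) ((1 : Matrix (Fin 4) (Fin 4) ℂ) 0 1)
  have p10 := n0 (FR (hfun X) 1 0) ((1 : Matrix (Fin 4) (Fin 4) ℂ) 1 0)
  have p11 := n0 (FR (hfun X) 1 1) ((1 : Matrix (Fin 4) (Fin 4) ℂ) 1 1)
  rw [m1, one_mul, Real.norm_of_nonneg (le_max_of_le_left (le_max_of_le_left p00)),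
    Real.norm_of_nonneg (by linarith)]
  refine max_le (max_le ?_ ?_) (max_le ?_ ?_) <;> linarith
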